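/- Let f, g : I → ℝ be continuous and strictly monotone. Then A^[f] ≤ A^[g] if and only if for all x, y, z ∈ I with x < y < z one has (f(x) − f(y))/(f(x) − f(z)) ≥ (g(x) − g(y))/(g(x) − g(z)). -/

import Mathlib

/-!
Both sides of the equivalence are unchanged when `f` or `g` is replaced by its negative, so both
generators may be taken strictly increasing.

If the condition fails at `x < y < z`, pick a rational `k / n` strictly between
`(f x - f y) / (f x - f z)` and `(g x - g y) / (g x - g z)`. For the vector made of `k` copies of `z`
and `n - k` copies of `x`, the `f`-mean is larger than `y` and the `g`-mean is smaller than `y`.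

Conversely, the condition says that `g ∘ f⁻¹` is convex on the interval `f(I)`
(`convexOn_comp_invFunOn`), and Jensen's inequality compares the two means.
-/

open Set Function Filter

/-- The quasi-arithmetic mean generated by `f` on the interval `I`,
applied to a vector `a ∈ Iⁿ`: `f⁻¹((f a₁ + ⋯ + f aₙ)/n)`, where the
inverse of `f` is taken on `I`. -/
noncomputable def qam (I : Set ℝ) (f : ℝ → ℝ) {n : ℕ} (a : Fin n → ℝ) : ℝ :=
  Function.invFunOn f I ((∑ i, f (a i)) / n)

/-- The natural (pointwise) partial order on quasi-arithmetic means: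
`A^[f] ≤ A^[g]` iff `A^[f](a) ≤ A^[g](a)` for every `n ≥ 1` and every `a ∈ Iⁿ`. -/
def qamLE (I : Set ℝ) (f g : ℝ → ℝ) : Prop :=
  ∀ n : ℕ, 1 ≤ n → ∀ a : Fin n → ℝ, (∀ i, a i ∈ I) → qam I f a ≤ qam I g a

/-- `A^[f] = A^[g]` : equality of the two quasi-arithmetic means as means. -/
def qamEQ (I : Set ℝ) (f g : ℝ → ℝ) : Prop :=
  ∀ n : ℕ, 1 ≤ n → ∀ a : Fin n → ℝ, (∀ i, a i ∈ I) → qam I f a = qam I g a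

/-- `f` is strictly monotone on `I` (strictly increasing or strictly decreasing). -/
def StrictMonoOrAntiOn (f : ℝ → ℝ) (I : Set ℝ) : Prop :=
  StrictMonoOn f I ∨ StrictAntiOn f I

lemma convex_image_of_continuousOn {I : Set ℝ} (hI : I.OrdConnected) {f : ℝ → ℝ}
    (hf : ContinuousOn f I) : Convex ℝ (f '' I) :=
  (hI.isPreconnected.image f hf).ordConnected.convex

/-- The average of the values of `f` lies in `f(I)`, so `invFunOn` returns a genuine preimage. -/
lemma qam_spec {I : Set ℝ} (hI : I.OrdConnected) {f : ℝ → ℝ} (hf : ContinuousOn f I)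
    {n : ℕ} (hn : 1 ≤ n) {a : Fin n → ℝ} (ha : ∀ i, a i ∈ I) :
    qam I f a ∈ I ∧ f (qam I f a) = (∑ i, f (a i)) / n := by
  have hn0 : (n : ℝ) ≠ 0 := by positivity
  have hmem : (∑ i, f (a i)) / n ∈ f '' I := by
    have h := (convex_image_of_continuousOn hI hf).sum_mem (t := Finset.univ)
      (w := fun _ : Fin n => (1 : ℝ) / n) (z := fun i => f (a i))
      (fun _ _ => by positivity) (by simp [hn0]) (fun i _ => mem_image_of_mem f (ha i))
    convert h using 1
    rw [Finset.sum_div]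
    exact Finset.sum_congr rfl fun i _ => by rw [smul_eq_mul]; ring
  exact ⟨invFunOn_mem hmem, invFunOn_eq hmem⟩

lemma qam_neg {I : Set ℝ} (hI : I.OrdConnected) {f : ℝ → ℝ} (hf : ContinuousOn f I)
    (hinj : InjOn f I) {n : ℕ} (hn : 1 ≤ n) {a : Fin n → ℝ} (ha : ∀ i, a i ∈ I) :
    qam I (fun x => -f x) a = qam I f a := by
  obtain ⟨h1, h2⟩ := qam_spec hI hf hn ha
  obtain ⟨h3, h4⟩ := qam_spec (f := fun x => -f x) hI hf.neg hn ha
  refine hinj h3 h1 ?_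
  simp only [Finset.sum_neg_distrib, neg_div, neg_inj] at h4
  rw [h4, h2]

/-- Every generator may be replaced by a strictly increasing one with the same quasi-arithmetic mean
and the same difference quotients. -/
lemma exists_strictMonoOn_generator {I : Set ℝ} (hI : I.OrdConnected) {f : ℝ → ℝ}
    (hf : ContinuousOn f I) (hm : StrictMonoOrAntiOn f I) :
    ∃ F : ℝ → ℝ, ContinuousOn F I ∧ StrictMonoOn F I ∧
      (∀ n : ℕ, 1 ≤ n → ∀ a : Fin n → ℝ, (∀ i, a i ∈ I) → qam I f a = qam I F a) ∧
      ∀ x y z, (f x - f y) / (f x - f z) = (F x - F y) / (F x - F z) := by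
  rcases hm with hm | hm
  · exact ⟨f, hf, hm, fun _ _ _ _ => rfl, fun _ _ _ => rfl⟩
  · refine ⟨fun x => -f x, hf.neg, fun x hx y hy h => neg_lt_neg (hm hx hy h),
      fun n hn a ha => (qam_neg hI hf hm.injOn hn ha).symm, fun x y z => ?_⟩
    rw [← neg_div_neg_eq]
    ring_nf

lemma convexOn_comp_invFunOn {I : Set ℝ} (hI : I.OrdConnected) {f g : ℝ → ℝ}
    (hfc : ContinuousOn f I) (hf : StrictMonoOn f I) (hg : StrictMonoOn g I)
    (h : ∀ x ∈ I, ∀ y ∈ I, ∀ z ∈ I, x < y → y < z →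
      (f x - f y) / (f x - f z) ≥ (g x - g y) / (g x - g z)) :
    ConvexOn ℝ (f '' I) (fun u => g (invFunOn f I u)) := by
  have hconv := convex_image_of_continuousOn hI hfc
  refine convexOn_of_slope_mono_adjacent hconv ?_
  intro p q r hp hr hpq hqr
  have hq : q ∈ f '' I := hconv.ordConnected.out hp hr ⟨hpq.le, hqr.le⟩
  obtain ⟨x, hx, rfl⟩ := hp
  obtain ⟨y, hy, rfl⟩ := hq
  obtain ⟨z, hz, rfl⟩ := hr
  simp only [hf.injOn.leftInvOn_invFunOn hx, hf.injOn.leftInvOn_invFunOn hy,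
    hf.injOn.leftInvOn_invFunOn hz]
  have hxy := (hf.lt_iff_lt hx hy).1 hpq
  have hyz := (hf.lt_iff_lt hy hz).1 hqr
  have hgxz := hg hx hz (hxy.trans hyz)
  have key := h x hx y hy z hz hxy hyz
  rw [ge_iff_le, ← neg_div_neg_eq (g x - g y), ← neg_div_neg_eq (f x - f y),
    div_le_div_iff₀ (by linarith) (by linarith)] at key
  rw [div_le_div_iff₀ (by linarith) (by linarith)]
  linarith

/-- The vector with `k` copies of `z` and `n - k` copies of `x`. -/
noncomputable def twoValued (n k : ℕ) (x z : ℝ) : Fin n → ℝ :=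
  fun i => if (i : ℕ) < k then z else x

lemma avg_twoValued (f : ℝ → ℝ) {n k : ℕ} (hn : 1 ≤ n) (hk : k ≤ n) (x z : ℝ) :
    (∑ i, f (twoValued n k x z i)) / n = f x + (k : ℝ) / n * (f z - f x) := by
  have hn0 : (n : ℝ) ≠ 0 := by positivity
  have h : ∀ i : Fin n, f (twoValued n k x z i)
      = f x + (if (i : ℕ) < k then (1 : ℝ) else 0) * (f z - f x) := by
    intro i
    unfold twoValued
    split_ifs <;> ring
  have hc : ∑ i : Fin n, (if (i : ℕ) < k then (1 : ℝ) else 0) = k := by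
    rw [Fin.sum_univ_eq_sum_range (fun i => if i < k then (1 : ℝ) else 0), Finset.sum_boole]
    congr 1
    rw [show (Finset.range n).filter (· < k) = Finset.range k by
      ext i; simp only [Finset.mem_filter, Finset.mem_range]; omega]
    exact Finset.card_range k
  rw [Finset.sum_congr rfl fun i _ => h i, Finset.sum_add_distrib, ← Finset.sum_mul, hc]
  simp only [Finset.sum_const, Finset.card_univ, Fintype.card_fin, nsmul_eq_mul]
  field_simp

lemma qamLE_iff_of_strictMonoOn {I : Set ℝ} (hI : I.OrdConnected) {f g : ℝ → ℝ}
    (hfc : ContinuousOn f I) (hgc : ContinuousOn g I)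
    (hf : StrictMonoOn f I) (hg : StrictMonoOn g I) :
    qamLE I f g ↔
      ∀ x ∈ I, ∀ y ∈ I, ∀ z ∈ I, x < y → y < z →
        (f x - f y) / (f x - f z) ≥ (g x - g y) / (g x - g z) := by
  constructor
  · intro hle x hx y hy z hz hxy hyz
    by_contra! hlt
    have hfxy := hf hx hy hxy
    have hfyz := hf hy hz hyz
    have hgxy := hg hx hy hxy
    have hgyz := hg hy hz hyz
    obtain ⟨q, hq1, hq2⟩ := exists_rat_btwn hlt
    rw [← neg_div_neg_eq, div_lt_iff₀ (by linarith)] at hq1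
    rw [← neg_div_neg_eq, lt_div_iff₀ (by linarith)] at hq2
    have hq0 : (0 : ℝ) < q := by
      by_contra! h0
      nlinarith
    have hq1' : (q : ℝ) < 1 := by
      by_contra! h1
      nlinarith
    have hnum : 0 < q.num := Rat.num_pos.2 (by exact_mod_cast hq0)
    obtain ⟨k, hk⟩ := Int.eq_ofNat_of_zero_le hnum.le
    have hqk : (q : ℝ) = (k : ℝ) / q.den := by
      rw [Rat.cast_def, hk]
      simp
    have hkn : k ≤ q.den := by
      rw [hqk, div_lt_one (by exact_mod_cast q.den_pos)] at hq1'
      exact_mod_cast hq1'.le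
    have ha : ∀ i, twoValued q.den k x z i ∈ I := by
      intro i
      unfold twoValued
      split_ifs <;> assumption
    obtain ⟨hm, hmf⟩ := qam_spec hI hfc q.den_pos ha
    obtain ⟨hm', hmg⟩ := qam_spec hI hgc q.den_pos ha
    rw [avg_twoValued f q.den_pos hkn, ← hqk] at hmf
    rw [avg_twoValued g q.den_pos hkn, ← hqk] at hmg
    have h1 : y < qam I f (twoValued q.den k x z) :=
      (hf.lt_iff_lt hy hm).1 (by rw [hmf]; linarith)
    have h2 : qam I g (twoValued q.den k x z) < y :=
      (hg.lt_iff_lt hm' hy).1 (by rw [hmg]; linarith)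
    exact absurd (hle _ q.den_pos _ ha) (not_le.2 (h2.trans h1))
  · intro h n hn a ha
    obtain ⟨hm, hmf⟩ := qam_spec hI hfc hn ha
    obtain ⟨hm', hmg⟩ := qam_spec hI hgc hn ha
    have hn0 : (n : ℝ) ≠ 0 := by positivity
    refine (hg.le_iff_le hm hm').1 ?_
    have hJ := (convexOn_comp_invFunOn hI hfc hf hg h).map_sum_le (t := Finset.univ)
      (w := fun _ : Fin n => (1 : ℝ) / n) (p := fun i => f (a i))
      (fun _ _ => by positivity) (by simp [hn0]) (fun i _ => mem_image_of_mem f (ha i))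
    simp only [smul_eq_mul, ← Finset.mul_sum, hf.injOn.leftInvOn_invFunOn (ha _)] at hJ
    rw [one_div_mul_eq_div, one_div_mul_eq_div, ← hmf, ← hmg,
      hf.injOn.leftInvOn_invFunOn hm] at hJ
    exact hJ

/-- Páles' condition: `A^[f] ≤ A^[g]` iff
`(f(x)-f(y))/(f(x)-f(z)) ≥ (g(x)-g(y))/(g(x)-g(z))` for all `x < y < z` in `I`. -/
theorem qam_le_iff_pales_condition
    (I : Set ℝ) (hI : I.OrdConnected) (hInontriv : ∃ x ∈ I, ∃ y ∈ I, x < y)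
    (f g : ℝ → ℝ) (hfc : ContinuousOn f I) (hgc : ContinuousOn g I)
    (hfm : StrictMonoOrAntiOn f I) (hgm : StrictMonoOrAntiOn g I) :
    qamLE I f g ↔
      ∀ x ∈ I, ∀ y ∈ I, ∀ z ∈ I, x < y → y < z →
        (f x - f y) / (f x - f z) ≥ (g x - g y) / (g x - g z) := by
  obtain ⟨F, hFc, hF, hFq, hFd⟩ := exists_strictMonoOn_generator hI hfc hfm
  obtain ⟨G, hGc, hG, hGq, hGd⟩ := exists_strictMonoOn_generator hI hgc hgm
  simp only [hFd, hGd]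
  rw [← qamLE_iff_of_strictMonoOn hI hFc hGc hF hG]
  refine forall_congr' fun n => forall_congr' fun hn => forall_congr' fun a =>
    forall_congr' fun ha => ?_
  rw [hFq n hn a ha, hGq n hn a ha]
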